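/- Let S be a Noetherian unique factorization domain and let 0 → M → N → P → 0 be a short exact sequence of finitely generated torsion S-modules. Then Ord(N) = Ord(M)·Ord(P) up to units, where Ord denotes the order of the module (a generator of the smallest principal ideal containing the zeroth Fitting ideal E₀). -/

import Mathlib

/-- The zeroth Fitting ideal `E₀(M)` of a module `M` over a commutative ring `S`:
the ideal generated by determinants of square matrices of relations, i.e. by `det A` for
every `n`, every surjection `φ : S^n → M` and every `n×n` matrix `A` whose columns are
relations (`φ ∘ A = 0`).  For a finitely presented module with presentation
`S^m → S^n → M → 0` this is the ideal generated by the `n×n` minors of the presentation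
matrix. -/
def fittingIdeal₀ (S : Type*) [CommRing S] (M : Type*) [AddCommGroup M] [Module S M] :
    Ideal S :=
  Ideal.span { r : S | ∃ (n : ℕ) (φ : (Fin n → S) →ₗ[S] M) (A : Matrix (Fin n) (Fin n) S),
    Function.Surjective φ ∧ (∀ v : Fin n → S, φ (A.mulVec v) = 0) ∧ r = A.det }

/-- `x` is an order of the module `M` (denoted `Ord(M)`): the principal ideal `(x)` is the
smallest principal ideal containing the zeroth Fitting ideal `E₀(M)`. -/
def IsOrder (S : Type*) [CommRing S] (M : Type*) [AddCommGroup M] [Module S M] (x : S) :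
    Prop :=
  fittingIdeal₀ S M ≤ Ideal.span {x} ∧
    ∀ y : S, fittingIdeal₀ S M ≤ Ideal.span {y} → Ideal.span {x} ≤ Ideal.span {y}

/-!
Computing Fitting ideals with endomorphisms of finite free modules, a block triangular relation
endomorphism gives `E₀(M) * E₀(P) ≤ E₀(N)`. This inclusion may be strict, but it becomes an
equality after localizing at a multiplicative set `T` for which `T⁻¹S` is a principal ideal domain:
given a surjection `F → N` from a free module and an endomorphism `γ` of `F` whose range consists
of relations, the kernel of `F → P` is then locally the range of some `β : F → F`, the composite
`F → F → N` factors through a surjection `F → M`, and `γ = β ∘ α`, where `α` is a relation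
endomorphism for `M` and `β` one for `P`. In a unique factorization domain this applies to the
complement of `(p)` for every prime element `p` and to the set of nonzero elements, and divisibility
can be tested at these localizations.
-/

section LinearAlgebra

variable {S : Type*} [CommRing S] {F G M : Type*} [AddCommGroup F] [AddCommGroup G]
  [AddCommGroup M] [Module S F] [Module S G] [Module S M]

theorem exists_comp_eq_of_range_le_range [Module.Projective S G] {φ : F →ₗ[S] M} {ψ : G →ₗ[S] M}
    (h : LinearMap.range ψ ≤ LinearMap.range φ) : ∃ δ : G →ₗ[S] F, φ ∘ₗ δ = ψ := by
  obtain ⟨δ, hδ⟩ := Module.projective_lifting_property φ.rangeRestrict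
    (ψ.codRestrict (LinearMap.range φ) fun y ↦ h ⟨y, rfl⟩) φ.surjective_rangeRestrict
  exact ⟨δ, LinearMap.ext fun y ↦ congrArg Subtype.val (LinearMap.congr_fun hδ y)⟩

theorem det_coprod_prod_comp_snd [Module.Free S F] [Module.Finite S F] [Module.Free S G]
    [Module.Finite S G] (α : Module.End S F) (δ : G →ₗ[S] F) (β : Module.End S G) :
    LinearMap.det ((α.coprod δ).prod (β ∘ₗ LinearMap.snd S F G)) =
      LinearMap.det α * LinearMap.det β := by
  classical
  let b := Module.Free.chooseBasis S F
  let c := Module.Free.chooseBasis S G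
  have toMatrix_eq : LinearMap.toMatrix (b.prod c) (b.prod c)
      ((α.coprod δ).prod (β ∘ₗ LinearMap.snd S F G)) =
      Matrix.fromBlocks (LinearMap.toMatrix b b α) (LinearMap.toMatrix c b δ) 0
        (LinearMap.toMatrix c c β) := by
    ext (i | i) (j | j) <;> simp [LinearMap.toMatrix_apply]
  rw [← LinearMap.det_toMatrix (b.prod c), toMatrix_eq, Matrix.det_fromBlocks_zero₂₁,
    LinearMap.det_toMatrix, LinearMap.det_toMatrix]

end LinearAlgebra

section FittingIdeal

variable {S : Type*} [CommRing S] {F G M N P : Type*} [AddCommGroup F] [AddCommGroup G]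
  [AddCommGroup M] [AddCommGroup N] [AddCommGroup P]
  [Module S F] [Module S G] [Module S M] [Module S N] [Module S P]

theorem det_mem_fittingIdeal₀ [Module.Free S F] [Module.Finite S F] {φ : F →ₗ[S] M}
    (hφ : Function.Surjective φ) {α : Module.End S F} (hα : φ ∘ₗ α = 0) :
    LinearMap.det α ∈ fittingIdeal₀ S M := by
  classical
  let b := (Module.Free.chooseBasis S F).reindex (Fintype.equivFin _)
  refine Ideal.subset_span ⟨_, φ ∘ₗ b.equivFun.symm, LinearMap.toMatrix b b α,
    hφ.comp b.equivFun.symm.surjective, fun v ↦ ?_, (LinearMap.det_toMatrix b α).symm⟩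
  have mulVec_eq : (LinearMap.toMatrix b b α).mulVec v = b.equivFun (α (b.equivFun.symm v)) := by
    simpa only [← Module.Basis.equivFun_apply, LinearEquiv.apply_symm_apply] using
      LinearMap.toMatrix_mulVec_repr b b α (b.equivFun.symm v)
  simpa [mulVec_eq] using LinearMap.congr_fun hα (b.equivFun.symm v)

theorem fittingIdeal₀_eq_span_det : fittingIdeal₀ S M =
    Ideal.span {r | ∃ (n : ℕ) (φ : (Fin n → S) →ₗ[S] M) (α : Module.End S (Fin n → S)),
      Function.Surjective φ ∧ φ ∘ₗ α = 0 ∧ LinearMap.det α = r} := by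
  refine le_antisymm (Ideal.span_mono ?_) (Ideal.span_le.2 ?_)
  · rintro _ ⟨n, φ, A, hφ, hA, rfl⟩
    exact ⟨n, φ, Matrix.toLin' A, hφ, LinearMap.ext hA, LinearMap.det_toLin' A⟩
  · rintro _ ⟨n, φ, α, hφ, hα, rfl⟩
    exact det_mem_fittingIdeal₀ hφ hα

theorem det_mul_det_mem_fittingIdeal₀ [Module.Free S F] [Module.Finite S F] [Module.Free S G]
    [Module.Finite S G] {φ : F →ₗ[S] M} {ψ : G →ₗ[S] M}
    (hφψ : Function.Surjective (φ.coprod ψ)) {α : Module.End S F} (hα : φ ∘ₗ α = 0)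
    {β : Module.End S G} (hβ : LinearMap.range (ψ ∘ₗ β) ≤ LinearMap.range φ) :
    LinearMap.det α * LinearMap.det β ∈ fittingIdeal₀ S M := by
  obtain ⟨δ, hδ⟩ := exists_comp_eq_of_range_le_range hβ
  rw [← det_coprod_prod_comp_snd α (-δ) β]
  refine det_mem_fittingIdeal₀ hφψ (LinearMap.ext fun ⟨a, b⟩ ↦ ?_)
  have hαa : φ (α a) = 0 := LinearMap.congr_fun hα a
  have hδb : φ (δ b) = ψ (β b) := LinearMap.congr_fun hδ b
  simp [hαa, hδb]

theorem fittingIdeal₀_mul_le {f : M →ₗ[S] N} {g : N →ₗ[S] P} (hg : Function.Surjective g)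
    (hfg : Function.Exact f g) : fittingIdeal₀ S M * fittingIdeal₀ S P ≤ fittingIdeal₀ S N := by
  rw [fittingIdeal₀_eq_span_det (M := M), fittingIdeal₀_eq_span_det (M := P), Ideal.span_mul_span',
    Ideal.span_le]
  rintro _ ⟨_, ⟨m, φ, α, hφ, hα, rfl⟩, _, ⟨n, ψ, β, hψ, hβ, rfl⟩, rfl⟩
  obtain ⟨χ, hχ⟩ := Module.projective_lifting_property g ψ hg
  have hfφ : LinearMap.range (f ∘ₗ φ) = LinearMap.ker g := by
    rw [LinearMap.range_comp_of_range_eq_top f (LinearMap.range_eq_top.2 hφ),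
      hfg.linearMap_ker_eq]
  refine det_mul_det_mem_fittingIdeal₀ (φ := f ∘ₗ φ) (ψ := χ) (fun y ↦ ?_) ?_ ?_
  · obtain ⟨b, hb⟩ := hψ (g y)
    obtain ⟨a, ha⟩ : y - χ b ∈ LinearMap.range (f ∘ₗ φ) := by
      rw [hfφ, LinearMap.mem_ker, map_sub, ← hb, ← hχ, LinearMap.comp_apply, sub_self]
    exact ⟨(a, b), by rw [LinearMap.coprod_apply, ha, sub_add_cancel]⟩
  · rw [LinearMap.comp_assoc, hα, LinearMap.comp_zero]
  · rw [hfφ, LinearMap.range_le_ker_iff, ← LinearMap.comp_assoc, hχ, hβ]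

theorem exists_pow_mul_det_mem_fittingIdeal₀ [Module.Free S F] [Module.Finite S F]
    [Module.Finite S M] {φ : F →ₗ[S] M} {s : S} (hs : ∀ m, s • m ∈ LinearMap.range φ)
    {α : Module.End S F} (hα : φ ∘ₗ α = 0) :
    ∃ k : ℕ, s ^ k * LinearMap.det α ∈ fittingIdeal₀ S M := by
  obtain ⟨n, ψ, hψ⟩ := Module.Finite.exists_fin' S M
  refine ⟨Module.finrank S (Fin n → S), ?_⟩
  have det_smul_id : LinearMap.det (s • LinearMap.id : Module.End S (Fin n → S)) =
      s ^ Module.finrank S (Fin n → S) := by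
    rw [LinearMap.det_smul, LinearMap.det_id, mul_one]
  rw [mul_comm, ← det_smul_id]
  refine det_mul_det_mem_fittingIdeal₀ (ψ := ψ) (fun m ↦ ?_) hα ?_
  · obtain ⟨b, hb⟩ := hψ m
    exact ⟨(0, b), by simp [hb]⟩
  · rintro _ ⟨b, rfl⟩
    simpa using hs (ψ b)

end FittingIdeal

section EndRange

variable {S : Type*} [CommRing S]

/-- Up to denominators in `T`, every submodule of `F` is the range of an endomorphism of `F`.
For `F = S` this says that every ideal is principal up to denominators in `T`, an elementary form
of `T⁻¹S` being a principal ideal ring; quantifying over endomorphisms lets the property pass to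
finite free modules without reference to the localization. -/
def SubmodulesAreEndRangesUpTo (T : Submonoid S) (F : Type*) [AddCommGroup F] [Module S F] : Prop :=
  ∀ K : Submodule S F, ∃ β : Module.End S F, LinearMap.range β ≤ K ∧
    ∃ s ∈ T, ∀ k ∈ K, s • k ∈ LinearMap.range β

namespace SubmodulesAreEndRangesUpTo

variable {T : Submonoid S} {F G M N P : Type*} [AddCommGroup F] [AddCommGroup G]
  [AddCommGroup M] [AddCommGroup N] [AddCommGroup P]
  [Module S F] [Module S G] [Module S M] [Module S N] [Module S P]

theorem of_forall_ideal (h : ∀ I : Ideal S, ∃ b ∈ I, ∃ s ∈ T, ∀ a ∈ I, b ∣ s * a) :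
    SubmodulesAreEndRangesUpTo T S := by
  intro I
  obtain ⟨b, hb, s, hs, hsb⟩ := h I
  refine ⟨LinearMap.mulRight S b, ?_, s, hs, fun a ha ↦ ?_⟩
  · rintro _ ⟨c, rfl⟩
    exact I.smul_mem c hb
  · obtain ⟨c, hc⟩ := hsb a ha
    exact ⟨c, (mul_comm c b).trans hc.symm⟩

theorem of_linearEquiv (hF : SubmodulesAreEndRangesUpTo T F) (e : F ≃ₗ[S] G) :
    SubmodulesAreEndRangesUpTo T G := by
  intro K
  obtain ⟨β, hβK, s, hs, hsβ⟩ := hF (K.comap e.toLinearMap)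
  refine ⟨e.conj β, ?_, s, hs, fun k hk ↦ ?_⟩
  · rintro _ ⟨y, rfl⟩
    exact hβK ⟨e.symm y, rfl⟩
  · obtain ⟨d, hd⟩ := hsβ (e.symm k) (by simpa using hk)
    exact ⟨e d, by simp [LinearEquiv.conj_apply, hd]⟩

theorem prod [Module.Projective S F] (hF : SubmodulesAreEndRangesUpTo T F)
    (hG : SubmodulesAreEndRangesUpTo T G) : SubmodulesAreEndRangesUpTo T (F × G) := by
  intro K
  obtain ⟨β, hβK, s, hs, hsβ⟩ := hF (K.map (LinearMap.fst S F G))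
  obtain ⟨γ, hγK, t, ht, htγ⟩ := hG (K.comap (LinearMap.inr S F G))
  obtain ⟨δ, hδ⟩ : ∃ δ : F →ₗ[S] K, (LinearMap.fst S F G ∘ₗ K.subtype) ∘ₗ δ = β :=
    exists_comp_eq_of_range_le_range (by rwa [LinearMap.range_comp, Submodule.range_subtype])
  refine ⟨(K.subtype ∘ₗ δ).coprod (LinearMap.inr S F G ∘ₗ γ), ?_, t * s, T.mul_mem ht hs,
    fun k hk ↦ ?_⟩
  · rintro _ ⟨⟨a, b⟩, rfl⟩
    exact K.add_mem (δ a).2 (hγK ⟨b, rfl⟩)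
  · obtain ⟨a, ha⟩ := hsβ k.1 ⟨k, hk, rfl⟩
    have hδa : (δ a : F × G).1 = s • k.1 := (LinearMap.congr_fun hδ a).trans ha
    have remainder_eq : LinearMap.inr S F G (s • k.2 - (δ a : F × G).2) = s • k - δ a := by
      ext <;> simp [hδa]
    obtain ⟨b, hb⟩ := htγ (s • k.2 - (δ a : F × G).2) (by
      rw [Submodule.mem_comap, remainder_eq]
      exact K.sub_mem (K.smul_mem s hk) (δ a).2)
    refine ⟨(t • a, b), ?_⟩
    simp only [LinearMap.coprod_apply, LinearMap.comp_apply, Submodule.subtype_apply, map_smul,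
      hb]
    rw [remainder_eq, smul_sub, add_sub_cancel, mul_smul]

theorem pi [Module.Projective S F] (hF : SubmodulesAreEndRangesUpTo T F) (n : ℕ) :
    SubmodulesAreEndRangesUpTo T (Fin n → F) := by
  induction n with
  | zero =>
    exact fun K ↦ ⟨0, by simp, 1, T.one_mem, fun k _ ↦ ⟨0, Subsingleton.elim _ _⟩⟩
  | succ n ih => exact (hF.prod ih).of_linearEquiv (Fin.consLinearEquiv S fun _ ↦ F)

theorem exists_mul_det_mem_fittingIdeal₀_mul [Module.Free S F] [Module.Finite S F]
    [Module.Finite S M] (hF : SubmodulesAreEndRangesUpTo T F) {f : M →ₗ[S] N} {g : N →ₗ[S] P}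
    (hf : Function.Injective f) (hg : Function.Surjective g) (hfg : Function.Exact f g)
    {θ : F →ₗ[S] N} (hθ : Function.Surjective θ) {γ : Module.End S F} (hγ : θ ∘ₗ γ = 0) :
    ∃ t ∈ T, t * LinearMap.det γ ∈ fittingIdeal₀ S M * fittingIdeal₀ S P := by
  obtain ⟨β, hβ, s, hs, hsβ⟩ := hF (LinearMap.ker (g ∘ₗ θ))
  have gθβ : (g ∘ₗ θ) ∘ₗ β = 0 := LinearMap.range_le_ker_iff.1 hβ
  obtain ⟨μ, hμ⟩ : ∃ μ : F →ₗ[S] M, f ∘ₗ μ = θ ∘ₗ β := exists_comp_eq_of_range_le_range (by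
    rwa [← hfg.linearMap_ker_eq, LinearMap.range_le_ker_iff])
  obtain ⟨α, hα⟩ : ∃ α : Module.End S F, β ∘ₗ α = s • γ := exists_comp_eq_of_range_le_range (by
    rintro _ ⟨a, rfl⟩
    have θγ : θ (γ a) = 0 := LinearMap.congr_fun hγ a
    exact hsβ (γ a) (by simp [θγ]))
  have μα : μ ∘ₗ α = 0 := by
    rw [← LinearMap.cancel_left hf, ← LinearMap.comp_assoc, hμ, LinearMap.comp_assoc, hα,
      LinearMap.comp_smul, hγ, smul_zero, LinearMap.comp_zero]
  have hsμ : ∀ m, s • m ∈ LinearMap.range μ := by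
    intro m
    obtain ⟨a, ha⟩ := hθ (f m)
    obtain ⟨d, hd⟩ := hsβ a (by simp [ha, hfg.apply_apply_eq_zero])
    refine ⟨d, hf ?_⟩
    rw [← LinearMap.comp_apply, hμ, LinearMap.comp_apply, hd, map_smul, map_smul, ha]
  obtain ⟨k, hk⟩ := exists_pow_mul_det_mem_fittingIdeal₀ hsμ μα
  have det_mul_det : LinearMap.det β * LinearMap.det α =
      s ^ Module.finrank S F * LinearMap.det γ := by
    rw [← LinearMap.det_comp, hα, LinearMap.det_smul]
  refine ⟨s ^ k * s ^ Module.finrank S F, T.mul_mem (T.pow_mem hs _) (T.pow_mem hs _), ?_⟩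
  rw [mul_assoc, ← det_mul_det, mul_left_comm, mul_comm (LinearMap.det β)]
  exact Ideal.mul_mem_mul hk (det_mem_fittingIdeal₀ (φ := g ∘ₗ θ) (hg.comp hθ) gθβ)

theorem exists_mul_mem_fittingIdeal₀_mul [Module.Finite S M]
    (hS : SubmodulesAreEndRangesUpTo T S) {f : M →ₗ[S] N} {g : N →ₗ[S] P}
    (hf : Function.Injective f) (hg : Function.Surjective g) (hfg : Function.Exact f g)
    {r : S} (hr : r ∈ fittingIdeal₀ S N) :
    ∃ t ∈ T, t * r ∈ fittingIdeal₀ S M * fittingIdeal₀ S P := by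
  rw [fittingIdeal₀_eq_span_det] at hr
  induction hr using Submodule.span_induction with
  | mem r hr =>
    obtain ⟨n, θ, γ, hθ, hγ, rfl⟩ := hr
    exact (hS.pi n).exists_mul_det_mem_fittingIdeal₀_mul hf hg hfg hθ hγ
  | zero => exact ⟨1, T.one_mem, by simp⟩
  | add r₁ r₂ _ _ ih₁ ih₂ =>
    obtain ⟨t₁, ht₁, h₁⟩ := ih₁
    obtain ⟨t₂, ht₂, h₂⟩ := ih₂
    refine ⟨t₁ * t₂, T.mul_mem ht₁ ht₂, ?_⟩
    rw [show t₁ * t₂ * (r₁ + r₂) = t₂ * (t₁ * r₁) + t₁ * (t₂ * r₂) by ring]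
    exact Ideal.add_mem _ (Ideal.mul_mem_left _ t₂ h₁) (Ideal.mul_mem_left _ t₁ h₂)
  | smul a r _ ih =>
    obtain ⟨t, ht, h⟩ := ih
    exact ⟨t, ht, by rw [smul_eq_mul, mul_left_comm]; exact Ideal.mul_mem_left _ a h⟩

theorem nonZeroDivisors_self [NoZeroDivisors S] :
    SubmodulesAreEndRangesUpTo (nonZeroDivisors S) S := by
  refine of_forall_ideal fun I ↦ ?_
  rcases eq_or_ne I ⊥ with rfl | hI
  · exact ⟨0, zero_mem _, 1, one_mem _, by simp⟩
  · obtain ⟨b, hb, hb0⟩ := Submodule.exists_mem_ne_zero_of_ne_bot hI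
    exact ⟨b, hb, b, mem_nonZeroDivisors_of_ne_zero hb0, fun a _ ↦ dvd_mul_right b a⟩

theorem primeCompl_self [IsDomain S] [WfDvdMonoid S] {p : S} (hp0 : p ≠ 0)
    [(Ideal.span {p}).IsPrime] : SubmodulesAreEndRangesUpTo (Ideal.span {p}).primeCompl S := by
  have hp : Prime p := (Ideal.span_singleton_prime hp0).1 inferInstance
  refine of_forall_ideal fun I ↦ ?_
  rcases eq_or_ne I ⊥ with rfl | hI
  · exact ⟨0, zero_mem _, 1, one_mem _, by simp⟩
  obtain ⟨b, ⟨hb, hb0⟩, b_min⟩ := exists_minimalFor_of_wellFoundedLT (fun b ↦ b ∈ I ∧ b ≠ 0)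
    (multiplicity p) (Submodule.exists_mem_ne_zero_of_ne_bot hI)
  obtain ⟨u, b_eq, hpu⟩ :=
    (FiniteMultiplicity.of_prime_left hp hb0).exists_eq_pow_mul_and_not_dvd
  refine ⟨b, hb, u, mt Ideal.mem_span_singleton.1 hpu, fun a ha ↦ ?_⟩
  rcases eq_or_ne a 0 with rfl | ha0
  · simp
  have multiplicity_le : multiplicity p b ≤ multiplicity p a :=
    (le_total _ _).elim id (b_min ⟨ha, ha0⟩)
  rw [b_eq, mul_comm u a]
  exact mul_dvd_mul_right ((pow_dvd_pow p multiplicity_le).trans (pow_multiplicity_dvd p a)) u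

end SubmodulesAreEndRangesUpTo

end EndRange

section Divisibility

variable {R : Type*} [CommMonoidWithZero R] [UniqueFactorizationMonoid R]

theorem dvd_mul_of_forall_dvd_mul {A : Set R} {x b y : R}
    (hx : ∀ d, (∀ a ∈ A, d ∣ a) → d ∣ x) (h : ∀ a ∈ A, y ∣ a * b) : y ∣ x * b := by
  rcases eq_or_ne b 0 with rfl | hb
  · simp
  obtain ⟨y, b, d, hyb, rfl, rfl⟩ := UniqueFactorizationMonoid.exists_reduced_factors' y b hb
  have y_dvd_x : y ∣ x := hx y fun a ha ↦ by
    have h_dvd := h a ha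
    rw [mul_left_comm] at h_dvd
    exact hyb.dvd_of_dvd_mul_right ((mul_dvd_mul_iff_left (left_ne_zero_of_mul hb)).1 h_dvd)
  rw [mul_left_comm]
  exact mul_dvd_mul_left d (y_dvd_x.mul_right b)

theorem dvd_of_forall_prime_exists_dvd_mul {a c : R} (h0 : ∃ t ≠ 0, a ∣ t * c)
    (h : ∀ p, Prime p → ∃ t, ¬ p ∣ t ∧ a ∣ t * c) : a ∣ c := by
  rcases eq_or_ne a 0 with rfl | ha
  · obtain ⟨t, ht, h_dvd⟩ := h0
    exact zero_dvd_iff.2 ((mul_eq_zero.1 (zero_dvd_iff.1 h_dvd)).resolve_left ht)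
  obtain ⟨a, c, d, hac, rfl, rfl⟩ := UniqueFactorizationMonoid.exists_reduced_factors a ha c
  have a_isUnit : IsUnit a := by
    by_contra not_isUnit
    obtain ⟨p, hp, hpa⟩ :=
      WfDvdMonoid.exists_irreducible_factor not_isUnit (right_ne_zero_of_mul ha)
    obtain ⟨t, hpt, h_dvd⟩ := h p hp.prime
    rw [mul_left_comm] at h_dvd
    have a_dvd_t : a ∣ t :=
      hac.dvd_of_dvd_mul_right ((mul_dvd_mul_iff_left (left_ne_zero_of_mul ha)).1 h_dvd)
    exact hpt (hpa.trans a_dvd_t)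
  exact mul_dvd_mul_left d a_isUnit.dvd

end Divisibility

section Order

variable {S : Type*} [CommRing S] {M N P : Type*} [AddCommGroup M] [AddCommGroup N]
  [AddCommGroup P] [Module S M] [Module S N] [Module S P] {x y z : S}

theorem IsOrder.dvd_iff (hx : IsOrder S M x) {d : S} :
    d ∣ x ↔ ∀ r ∈ fittingIdeal₀ S M, d ∣ r :=
  ⟨fun h _ hr ↦ h.trans (Ideal.mem_span_singleton.1 (hx.1 hr)), fun h ↦
    Ideal.span_singleton_le_span_singleton.1
      (hx.2 d fun r hr ↦ Ideal.mem_span_singleton.2 (h r hr))⟩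

theorem IsOrder.dvd_mul_iff [UniqueFactorizationMonoid S] (hx : IsOrder S M x)
    (hz : IsOrder S P z) {d : S} :
    d ∣ x * z ↔ ∀ r ∈ fittingIdeal₀ S M * fittingIdeal₀ S P, d ∣ r := by
  refine ⟨fun h r hr ↦ ?_, fun h ↦ ?_⟩
  · have mul_le : fittingIdeal₀ S M * fittingIdeal₀ S P ≤ Ideal.span {x * z} :=
      (Ideal.mul_mono hx.1 hz.1).trans_eq (Ideal.span_singleton_mul_span_singleton x z)
    exact h.trans (Ideal.mem_span_singleton.1 (mul_le hr))
  · refine dvd_mul_of_forall_dvd_mul (fun _ ↦ hx.dvd_iff.2) fun a ha ↦ ?_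
    rw [mul_comm]
    refine dvd_mul_of_forall_dvd_mul (fun _ ↦ hz.dvd_iff.2) fun b hb ↦ ?_
    rw [mul_comm]
    exact h _ (Ideal.mul_mem_mul ha hb)

theorem stmt_19_general [IsDomain S] [UniqueFactorizationMonoid S] [Module.Finite S M]
    [Module.Finite S P] (f : M →ₗ[S] N) (g : N →ₗ[S] P)
    (hf : Function.Injective f) (hg : Function.Surjective g) (hfg : Function.Exact f g)
    (hx : IsOrder S M x) (hy : IsOrder S N y) (hz : IsOrder S P z) : Associated y (x * z) := by
  refine associated_of_dvd_dvd ?_ ?_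
  · exact (hx.dvd_mul_iff hz).2 fun r hr ↦ hy.dvd_iff.1 dvd_rfl r (fittingIdeal₀_mul_le hg hfg hr)
  have dvd_of_mem_mul := (hx.dvd_mul_iff hz).1 dvd_rfl
  refine hy.dvd_iff.2 fun r hr ↦ dvd_of_forall_prime_exists_dvd_mul ?_ fun p hp ↦ ?_
  · obtain ⟨t, ht, h_mem⟩ := SubmodulesAreEndRangesUpTo.nonZeroDivisors_self
      |>.exists_mul_mem_fittingIdeal₀_mul hf hg hfg hr
    exact ⟨t, nonZeroDivisors.ne_zero ht, dvd_of_mem_mul _ h_mem⟩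
  · have : (Ideal.span {p}).IsPrime := (Ideal.span_singleton_prime hp.ne_zero).2 hp
    obtain ⟨t, ht, h_mem⟩ := SubmodulesAreEndRangesUpTo.primeCompl_self hp.ne_zero
      |>.exists_mul_mem_fittingIdeal₀_mul hf hg hfg hr
    exact ⟨t, mt Ideal.mem_span_singleton.2 ht, dvd_of_mem_mul _ h_mem⟩

end Order

/-- For a short exact sequence `0 → M → N → P → 0` of finitely generated torsion modules
over a Noetherian UFD `S`, one has `Ord(N) = Ord(M)·Ord(P)` up to units. -/
theorem stmt_19 (S : Type*) [CommRing S] [IsDomain S] [IsNoetherianRing S]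
    [UniqueFactorizationMonoid S]
    (M N P : Type*) [AddCommGroup M] [AddCommGroup N] [AddCommGroup P]
    [Module S M] [Module S N] [Module S P]
    [Module.Finite S M] [Module.Finite S N] [Module.Finite S P]
    (hM : Module.IsTorsion S M) (hN : Module.IsTorsion S N) (hP : Module.IsTorsion S P)
    (f : M →ₗ[S] N) (g : N →ₗ[S] P)
    (hf : Function.Injective f) (hg : Function.Surjective g)
    (hfg : Function.Exact f g)
    (x y z : S) (hx : IsOrder S M x) (hy : IsOrder S N y) (hz : IsOrder S P z) :
    Associated y (x * z) :=
  stmt_19_general f g hf hg hfg hx hy hz
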